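/- arXiv:1605.07913 — 5 statements merged into one kernel-verified Lean document; each statement's English description precedes it below -/
import Mathlib

section
/- Let Φ ∈ ℝ^{n×p}, f, z ∈ ℝⁿ, σ > 0, ζ ∈ ℝᵖ with Φᵀ(z − f) = σζ, let α > 0 and ν₁,…,ν_p ≥ 0, and let θ̂ minimize L(t) = ‖Φt − z‖₂² + 2α Σ_{j=1}^p ν_j|t_j| over t ∈ ℝᵖ. Then for every t ∈ ℝᵖ, writing f_t = Φt and f_θ̂ = Φθ̂: ‖f_θ̂ − f‖₂² + ‖Φ(θ̂ − t)‖₂² ≤ ‖f_t − f‖₂² + 2σ(θ̂ − t)ᵀζ + 2α Σ_{j=1}^p ν_j(|t_j| − |θ̂_j|). -/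
open MeasureTheory ProbabilityTheory Matrix Finset

noncomputable section

/-- Squared Euclidean norm of a vector. -/
def sqNorm {n : ℕ} (v : Fin n → ℝ) : ℝ := ∑ i, (v i)^2

/-- basic inequality for the weighted Lasso with noise vector ζ satisfying
Φᵀ(z − f) = σζ. -/
theorem stmt_4 {n p : ℕ} (Φ : Matrix (Fin n) (Fin p) ℝ) (f z : Fin n → ℝ)
    (σ : ℝ) (hσ : 0 < σ) (ζ : Fin p → ℝ) (hζ : Φᵀ.mulVec (z - f) = σ • ζ)
    (α : ℝ) (hα : 0 < α) (ν : Fin p → ℝ) (hν : ∀ j, 0 ≤ ν j)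
    (θ : Fin p → ℝ)
    (hmin : ∀ t : Fin p → ℝ,
      sqNorm (Φ.mulVec θ - z) + 2 * α * ∑ j, ν j * |θ j| ≤
        sqNorm (Φ.mulVec t - z) + 2 * α * ∑ j, ν j * |t j|) :
    ∀ t : Fin p → ℝ,
      sqNorm (Φ.mulVec θ - f) + sqNorm (Φ.mulVec (θ - t)) ≤
        sqNorm (Φ.mulVec t - f) + 2 * σ * ((θ - t) ⬝ᵥ ζ) +
          2 * α * ∑ j, ν j * (|t j| - |θ j|) := by
  intro t
  have hmv : Φ.mulVec (θ - t) = Φ.mulVec θ - Φ.mulVec t := Matrix.mulVec_sub _ _ _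
  have hz : (Φ.mulVec (θ - t)) ⬝ᵥ (z - f) = σ * ((θ - t) ⬝ᵥ ζ) := by
    have h1 : (θ - t) ⬝ᵥ (Φᵀ.mulVec (z - f)) = (Φ.mulVec (θ - t)) ⬝ᵥ (z - f) := by
      rw [Matrix.dotProduct_mulVec, Matrix.vecMul_transpose]
    rw [← h1, hζ, dotProduct_smul, smul_eq_mul]
  have exp : ∀ (s : ℝ) (a d : Fin n → ℝ),
      sqNorm (a - s • d) = sqNorm a - 2 * s * (d ⬝ᵥ a) + s ^ 2 * sqNorm d := by
    intro s a d
    simp only [sqNorm, dotProduct, Finset.mul_sum, ← Finset.sum_sub_distrib,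
      ← Finset.sum_add_distrib, Pi.sub_apply, Pi.smul_apply, smul_eq_mul]
    exact Finset.sum_congr rfl fun i _ => by ring
  have hP : ∑ j, ν j * (|t j| - |θ j|) = ∑ j, ν j * |t j| - ∑ j, ν j * |θ j| := by
    rw [← Finset.sum_sub_distrib]
    exact Finset.sum_congr rfl fun i _ => by ring
  have e1 : Φ.mulVec t - f = (Φ.mulVec θ - f) - (1 : ℝ) • Φ.mulVec (θ - t) := by
    rw [hmv, one_smul]; abel
  have e2 : Φ.mulVec (θ - t) ⬝ᵥ (Φ.mulVec θ - f) =
      Φ.mulVec (θ - t) ⬝ᵥ (Φ.mulVec θ - z) + Φ.mulVec (θ - t) ⬝ᵥ (z - f) := by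
    rw [← dotProduct_add]; congr 1; abel
  have hs : ∀ s : ℝ, 0 < s → s ≤ 1 →
      2 * (Φ.mulVec (θ - t) ⬝ᵥ (Φ.mulVec θ - z)) ≤
        2 * α * (∑ j, ν j * |t j| - ∑ j, ν j * |θ j|) + s * sqNorm (Φ.mulVec (θ - t)) := by
    intro s h0 h1
    have h := hmin (θ - s • (θ - t))
    have e3 : Φ.mulVec (θ - s • (θ - t)) - z =
        (Φ.mulVec θ - z) - s • Φ.mulVec (θ - t) := by
      rw [Matrix.mulVec_sub, Matrix.mulVec_smul]; abel
    rw [e3, exp] at h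
    have hc : ∑ j, ν j * |(θ - s • (θ - t)) j| ≤
        (1 - s) * ∑ j, ν j * |θ j| + s * ∑ j, ν j * |t j| := by
      rw [Finset.mul_sum, Finset.mul_sum, ← Finset.sum_add_distrib]
      refine Finset.sum_le_sum fun j _ => ?_
      have h2 : |(θ - s • (θ - t)) j| ≤ (1 - s) * |θ j| + s * |t j| := by
        have h3 : (θ - s • (θ - t)) j = (1 - s) * θ j + s * t j := by
          simp only [Pi.sub_apply, Pi.smul_apply, smul_eq_mul]; ring
        rw [h3]
        refine (abs_add_le _ _).trans (le_of_eq ?_)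
        rw [abs_mul, abs_mul, abs_of_pos h0, abs_of_nonneg (sub_nonneg.2 h1)]
      nlinarith [mul_le_mul_of_nonneg_left h2 (hν j)]
    have hc2 := mul_le_mul_of_nonneg_left hc (by positivity : 0 ≤ 2 * α)
    refine le_of_mul_le_mul_left ?_ h0
    linarith
  have key : 2 * (Φ.mulVec (θ - t) ⬝ᵥ (Φ.mulVec θ - z)) ≤
        2 * α * (∑ j, ν j * |t j| - ∑ j, ν j * |θ j|) := by
    have hD : 0 ≤ sqNorm (Φ.mulVec (θ - t)) := Finset.sum_nonneg fun i _ => sq_nonneg _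
    refine le_of_forall_pos_le_add fun ε hε => ?_
    set D := sqNorm (Φ.mulVec (θ - t))
    have hq : 0 < ε / (D + ε) := by positivity
    have hq1 : ε / (D + ε) ≤ 1 := by rw [div_le_one (by positivity)]; linarith
    refine (hs (ε / (D + ε)) hq hq1).trans ?_
    have : ε / (D + ε) * D ≤ ε := by
      rw [div_mul_eq_mul_div, div_le_iff₀ (by positivity)]; nlinarith
    linarith
  rw [e1, exp, hP, e2, hz]
  linarith
end
end

section
/- Consider observations y = Qf + ση ∈ ℝⁿ with Q ∈ ℝ^{n×n} invertible, Φ ∈ ℝ^{n×p} with ΦΦᵀ invertible, Ψ = Q(QᵀQ)⁻¹Φ with columns ψ_j and ν_j = ‖ψ_j‖₂, and z = (ΦΦᵀ)⁻¹ΦΨᵀy. Let θ̂ minimize ‖Φt − z‖₂² + 2α Σ_j ν_j|t_j| with α ≥ ᾱ₀ = σ√(2(τ+1) log p), τ > 0. If the noise event {for all j: |ψ_jᵀη| ≤ ν_j √(2(τ+1) log p)} holds, then for every t ∈ ℝᵖ: ‖f_θ̂ − f‖₂² + ‖Φ(θ̂ − t)‖₂² ≤ ‖f_t − f‖₂² +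 2α Σ_j ν_j(|t_j| − |θ̂_j|) + 2ᾱ₀ Σ_j ν_j|θ̂_j − t_j|. -/
open MeasureTheory ProbabilityTheory Matrix Finset

noncomputable section

/-- basic deterministic Lasso inequality on the noise event. -/
theorem stmt_6 {n p : ℕ} (Q : Matrix (Fin n) (Fin n) ℝ) (hQ : IsUnit Q.det)
    (Φ : Matrix (Fin n) (Fin p) ℝ) (hΦ : IsUnit (Φ * Φᵀ).det)
    (Ψ : Matrix (Fin n) (Fin p) ℝ) (hΨ : Ψ = Q * (Qᵀ * Q)⁻¹ * Φ)
    (ν : Fin p → ℝ) (hν : ∀ j, ν j = Real.sqrt (sqNorm (fun i => Ψ i j)))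
    (f η : Fin n → ℝ) (σ : ℝ) (hσ : 0 < σ) (τ : ℝ) (hτ : 0 < τ)
    (y z : Fin n → ℝ) (hy : y = Q.mulVec f + σ • η)
    (hz : z = ((Φ * Φᵀ)⁻¹ * Φ * Ψᵀ).mulVec y)
    (α : ℝ) (hα : α ≥ σ * Real.sqrt (2 * (τ + 1) * Real.log p))
    (θ : Fin p → ℝ)
    (hmin : ∀ t : Fin p → ℝ,
      sqNorm (Φ.mulVec θ - z) + 2 * α * ∑ j, ν j * |θ j| ≤
        sqNorm (Φ.mulVec t - z) + 2 * α * ∑ j, ν j * |t j|)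
    (hnoise : ∀ j : Fin p,
      |(fun i => Ψ i j) ⬝ᵥ η| ≤ ν j * Real.sqrt (2 * (τ + 1) * Real.log p)) :
    ∀ t : Fin p → ℝ,
      sqNorm (Φ.mulVec θ - f) + sqNorm (Φ.mulVec (θ - t)) ≤
        sqNorm (Φ.mulVec t - f) + 2 * α * ∑ j, ν j * (|t j| - |θ j|) +
          2 * (σ * Real.sqrt (2 * (τ + 1) * Real.log p)) * ∑ j, ν j * |θ j - t j| := by
  have hL0 : 0 ≤ Real.sqrt (2 * (τ + 1) * Real.log p) := Real.sqrt_nonneg _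
  generalize Real.sqrt (2 * (τ + 1) * Real.log p) = L at *
  have hα0 : 0 ≤ α := le_trans (mul_nonneg hσ.le hL0) hα
  have hν0 : ∀ j, 0 ≤ ν j := fun j => by rw [hν j]; exact Real.sqrt_nonneg _
  have hQt : IsUnit (Qᵀ).det := by rwa [Matrix.det_transpose]
  have hΨ' : Ψᵀ = Φᵀ * Q⁻¹ := by
    have h1 : Q * (Qᵀ * Q)⁻¹ = (Qᵀ)⁻¹ := by
      rw [Matrix.mul_inv_rev, ← Matrix.mul_assoc, Matrix.mul_nonsing_inv _ hQ, Matrix.one_mul]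
    rw [hΨ, h1, Matrix.transpose_mul, Matrix.transpose_nonsing_inv, Matrix.transpose_transpose]
  have hz' : z = f + σ • Q⁻¹.mulVec η := by
    have h2 : (Φ * Φᵀ)⁻¹ * Φ * Ψᵀ = Q⁻¹ := by
      rw [hΨ', Matrix.mul_assoc, ← Matrix.mul_assoc Φ, ← Matrix.mul_assoc,
        Matrix.nonsing_inv_mul _ hΦ, Matrix.one_mul]
    rw [hz, h2, hy, Matrix.mulVec_add, Matrix.mulVec_mulVec, Matrix.nonsing_inv_mul _ hQ,
      Matrix.one_mulVec, Matrix.mulVec_smul]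
  intro t
  have hw : Φ.mulVec (θ - t) ⬝ᵥ Q⁻¹.mulVec η = ∑ j, (θ j - t j) * ((fun i => Ψ i j) ⬝ᵥ η) := by
    have h3 : Φ.mulVec (θ - t) ⬝ᵥ Q⁻¹.mulVec η = (θ - t) ⬝ᵥ Ψᵀ.mulVec η := by
      rw [hΨ', ← Matrix.mulVec_mulVec, Matrix.dotProduct_mulVec (θ - t), Matrix.vecMul_transpose]
    rw [h3]
    rfl
  have hw2 : Φ.mulVec (θ - t) ⬝ᵥ Q⁻¹.mulVec η ≤ L * ∑ j, ν j * |θ j - t j| := by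
    rw [hw, Finset.mul_sum]
    refine Finset.sum_le_sum fun j _ => ?_
    calc _ ≤ |(θ j - t j) * ((fun i => Ψ i j) ⬝ᵥ η)| := le_abs_self _
      _ = |θ j - t j| * |(fun i => Ψ i j) ⬝ᵥ η| := abs_mul _ _
      _ ≤ |θ j - t j| * (ν j * L) := mul_le_mul_of_nonneg_left (hnoise j) (abs_nonneg _)
      _ = _ := by ring
  have hsq : ∀ v : Fin n → ℝ, sqNorm v = v ⬝ᵥ v := fun v => by
    simp [sqNorm, dotProduct, sq]
  set d := Φ.mulVec (θ - t) with hd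
  set w := Q⁻¹.mulVec η with hwdef
  have hT : Φ.mulVec t = Φ.mulVec θ - d := by rw [hd, Matrix.mulVec_sub]; abel
  set S := ∑ j, ν j * (|t j| - |θ j|) with hS
  set r := Φ.mulVec θ - z with hr
  have hquad : ∀ s : ℝ, 0 < s → s ≤ 1 → 0 ≤ -2 * (d ⬝ᵥ r) + 2 * α * S + s * (d ⬝ᵥ d) := by
    intro s hs hs1
    have h := hmin (θ - s • (θ - t))
    have e1 : Φ.mulVec (θ - s • (θ - t)) - z = r - s • d := by
      rw [Matrix.mulVec_sub, Matrix.mulVec_smul, hr, hd]; abel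
    have e2 : ∑ j, ν j * |(θ - s • (θ - t)) j| ≤ ∑ j, ν j * |θ j| + s * S := by
      rw [hS, Finset.mul_sum, ← Finset.sum_add_distrib]
      refine Finset.sum_le_sum fun j _ => ?_
      have : |(θ - s • (θ - t)) j| ≤ (1 - s) * |θ j| + s * |t j| := by
        have e : (θ - s • (θ - t)) j = (1 - s) * θ j + s * t j := by
          simp only [Pi.sub_apply, Pi.smul_apply, smul_eq_mul]; ring
        rw [e]
        refine (abs_add_le _ _).trans ?_
        rw [abs_mul, abs_mul, abs_of_nonneg (sub_nonneg.2 hs1), abs_of_pos hs]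
      calc _ ≤ ν j * ((1 - s) * |θ j| + s * |t j|) := mul_le_mul_of_nonneg_left this (hν0 j)
        _ = _ := by ring
    have e3 := mul_le_mul_of_nonneg_left e2 (mul_nonneg zero_le_two hα0)
    rw [e1, hsq, hsq (r - s • d)] at h
    simp only [sub_dotProduct, dotProduct_sub, smul_dotProduct, dotProduct_smul, smul_eq_mul,
      dotProduct_comm r d] at h
    have : 0 ≤ s * (-2 * (d ⬝ᵥ r) + 2 * α * S + s * (d ⬝ᵥ d)) := by linarith
    exact nonneg_of_mul_nonneg_right this hs
  have hfirst : 0 ≤ -2 * (d ⬝ᵥ r) + 2 * α * S := by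
    by_contra hneg
    push Not at hneg
    have hD : 0 ≤ d ⬝ᵥ d := by rw [← hsq]; exact Finset.sum_nonneg fun i _ => sq_nonneg _
    generalize -2 * (d ⬝ᵥ r) + 2 * α * S = c at *
    generalize d ⬝ᵥ d = D at *
    have h1 := hquad 1 one_pos le_rfl
    have hDp : 0 < D := by linarith
    have h2 := hquad (-c / (2 * D)) (by apply div_pos <;> linarith)
      (by rw [div_le_one (by linarith)]; linarith)
    have : -c / (2 * D) * D = -c / 2 := by field_simp
    linarith
  have hrw : r = (Φ.mulVec θ - f) - σ • w := by rw [hr, hz']; abel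
  have e4 : d ⬝ᵥ r = d ⬝ᵥ (Φ.mulVec θ - f) - σ * (d ⬝ᵥ w) := by
    rw [hrw, dotProduct_sub, dotProduct_smul, smul_eq_mul]
  have e5 : Φ.mulVec t - f = (Φ.mulVec θ - f) - d := by rw [hT]; abel
  rw [e5, hsq, hsq, hsq]
  generalize Φ.mulVec θ - f = g at *
  simp only [sub_dotProduct, dotProduct_sub, dotProduct_comm g d]
  have e6 := mul_le_mul_of_nonneg_left hw2 hσ.le
  linarith
end
end

section
/- Under the same setup (y = Qf + ση, Ψ = Q(QᵀQ)⁻¹Φ with ν_j = ‖ψ_j‖₂, z = (ΦΦᵀ)⁻¹ΦΨᵀy, θ̂ a minimizer of ‖Φt − z‖₂² + 2α Σ_j ν_j|t_j| with α ≥ ᾱ₀ = σ√(2(τ+1) log p)), suppose the noise event {for all j: |ψ_jᵀη| ≤ ν_j √(2(τ+1) log p)} holds. Then for every J ⊆ {1,…,p} and every t ∈ ℝᵖ with t_j = 0 for j ∉ J: ‖f_θ̂ − f‖₂² + ‖Φ(θ̂ − t)‖₂² ≤ ‖f_t − f‖₂² + 4α Σ_{j∈J} ν_j|θ̂_j − t_j|.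 -/
open MeasureTheory ProbabilityTheory Matrix Finset

noncomputable section

theorem aux_sq {n : ℕ} (a u : Fin n → ℝ) (s : ℝ) :
    sqNorm (a + s • u) = sqNorm a + 2 * s * (a ⬝ᵥ u) + s ^ 2 * sqNorm u := by
  simp only [sqNorm, dotProduct, Finset.mul_sum, ← Finset.sum_add_distrib]
  refine Finset.sum_congr rfl fun i _ => ?_
  simp only [Pi.add_apply, Pi.smul_apply, smul_eq_mul]
  ring

theorem aux_lim (b c : ℝ) (h : ∀ s : ℝ, 0 < s → s ≤ 1 → 0 ≤ s * b + s ^ 2 * c) : 0 ≤ b := by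
  by_contra! hb
  have hc : 0 < c := by have := h 1 one_pos le_rfl; linarith
  have hd : 0 < c - b := by linarith
  have hs : 0 < -b / (2 * (c - b)) := div_pos (by linarith) (by linarith)
  have hs1 : -b / (2 * (c - b)) ≤ 1 := by
    rw [div_le_one (by linarith)]; linarith
  have h1 := h _ hs hs1
  have h2 : 0 ≤ b + (-b / (2 * (c - b))) * c := by
    by_contra! h3
    have := mul_neg_of_pos_of_neg hs h3
    nlinarith
  have h4 : (-b / (2 * (c - b))) * c ≤ -b / 2 := by
    rw [div_mul_eq_mul_div, div_le_div_iff₀ (by linarith) (by norm_num)]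
    nlinarith [sq_nonneg b]
  linarith

/-- deterministic Lasso inequality on the noise event, for vectors supported
on a set J. -/
theorem stmt_7 {n p : ℕ} (Q : Matrix (Fin n) (Fin n) ℝ) (hQ : IsUnit Q.det)
    (Φ : Matrix (Fin n) (Fin p) ℝ) (hΦ : IsUnit (Φ * Φᵀ).det)
    (Ψ : Matrix (Fin n) (Fin p) ℝ) (hΨ : Ψ = Q * (Qᵀ * Q)⁻¹ * Φ)
    (ν : Fin p → ℝ) (hν : ∀ j, ν j = Real.sqrt (sqNorm (fun i => Ψ i j)))
    (f η : Fin n → ℝ) (σ : ℝ) (hσ : 0 < σ) (τ : ℝ) (hτ : 0 < τ)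
    (y z : Fin n → ℝ) (hy : y = Q.mulVec f + σ • η)
    (hz : z = ((Φ * Φᵀ)⁻¹ * Φ * Ψᵀ).mulVec y)
    (α : ℝ) (hα : α ≥ σ * Real.sqrt (2 * (τ + 1) * Real.log p))
    (θ : Fin p → ℝ)
    (hmin : ∀ t : Fin p → ℝ,
      sqNorm (Φ.mulVec θ - z) + 2 * α * ∑ j, ν j * |θ j| ≤
        sqNorm (Φ.mulVec t - z) + 2 * α * ∑ j, ν j * |t j|)
    (hnoise : ∀ j : Fin p,
      |(fun i => Ψ i j) ⬝ᵥ η| ≤ ν j * Real.sqrt (2 * (τ + 1) * Real.log p)) :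
    ∀ (J : Finset (Fin p)) (t : Fin p → ℝ), (∀ j ∉ J, t j = 0) →
      sqNorm (Φ.mulVec θ - f) + sqNorm (Φ.mulVec (θ - t)) ≤
        sqNorm (Φ.mulVec t - f) + 4 * α * ∑ j ∈ J, ν j * |θ j - t j| := by
  intro J t ht
  have hα0 : 0 ≤ α := le_trans (by positivity) hα
  have hν0 : ∀ j, 0 ≤ ν j := fun j => by rw [hν]; exact Real.sqrt_nonneg _
  have hQT : IsUnit (Qᵀ).det := by rwa [Matrix.det_transpose]
  -- simplify the matrices
  have hΨ' : Ψ = (Q⁻¹)ᵀ * Φ := by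
    rw [hΨ, Matrix.mul_inv_rev, ← Matrix.mul_assoc, Matrix.mul_nonsing_inv _ hQ,
      Matrix.one_mul, Matrix.transpose_nonsing_inv]
  have hz' : z = f + σ • (Q⁻¹ *ᵥ η) := by
    have : (Φ * Φᵀ)⁻¹ * Φ * Ψᵀ = Q⁻¹ := by
      rw [hΨ', Matrix.transpose_mul, Matrix.transpose_transpose, ← Matrix.mul_assoc,
        Matrix.mul_assoc (Φ * Φᵀ)⁻¹ Φ, Matrix.nonsing_inv_mul _ hΦ, Matrix.one_mul]
    rw [hz, this, hy, Matrix.mulVec_add, Matrix.mulVec_mulVec, Matrix.nonsing_inv_mul _ hQ,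
      Matrix.one_mulVec, Matrix.mulVec_smul]
  have hin : ∀ u : Fin p → ℝ, (Φ *ᵥ u) ⬝ᵥ (z - f) ≤ α * ∑ j, ν j * |u j| := by
    intro u
    have e : (Φ *ᵥ u) ⬝ᵥ (z - f) = ∑ j, σ * (u j * ((fun i => Ψ i j) ⬝ᵥ η)) := by
      have h1 : z - f = σ • (Q⁻¹ *ᵥ η) := by rw [hz']; simp
      have h2 : (Φ *ᵥ u) ⬝ᵥ (Q⁻¹ *ᵥ η) = u ⬝ᵥ (Ψᵀ *ᵥ η) := by
        rw [hΨ', Matrix.transpose_mul, Matrix.transpose_transpose, ← Matrix.mulVec_mulVec,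
          Matrix.dotProduct_mulVec u, Matrix.vecMul_transpose]
      rw [h1, dotProduct_smul, h2, smul_eq_mul, dotProduct, Finset.mul_sum]
      rfl
    rw [e, Finset.mul_sum]
    refine Finset.sum_le_sum fun j _ => ?_
    calc σ * (u j * ((fun i => Ψ i j) ⬝ᵥ η))
        ≤ σ * (|u j| * |(fun i => Ψ i j) ⬝ᵥ η|) := by
          rw [← abs_mul]
          exact mul_le_mul_of_nonneg_left (le_abs_self _) hσ.le
      _ ≤ σ * (|u j| * (ν j * Real.sqrt (2 * (τ + 1) * Real.log p))) := by
          have := hnoise j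
          gcongr
      _ = (σ * Real.sqrt (2 * (τ + 1) * Real.log p)) * (ν j * |u j|) := by ring
      _ ≤ α * (ν j * |u j|) :=
          mul_le_mul_of_nonneg_right hα (mul_nonneg (hν0 j) (abs_nonneg _))
  -- first-order condition
  have hfo : 0 ≤ 2 * ((Φ *ᵥ θ - z) ⬝ᵥ (Φ *ᵥ (t - θ)))
      + 2 * α * (∑ j, ν j * |t j| - ∑ j, ν j * |θ j|) := by
    refine aux_lim _ (sqNorm (Φ *ᵥ (t - θ))) fun s hs hs1 => ?_
    have h1 := hmin (θ + s • (t - θ))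
    have h2 : Φ *ᵥ (θ + s • (t - θ)) - z = (Φ *ᵥ θ - z) + s • (Φ *ᵥ (t - θ)) := by
      rw [Matrix.mulVec_add, Matrix.mulVec_smul]; abel
    have h3 : ∑ j, ν j * |(θ + s • (t - θ)) j|
        ≤ (1 - s) * ∑ j, ν j * |θ j| + s * ∑ j, ν j * |t j| := by
      rw [Finset.mul_sum, Finset.mul_sum, ← Finset.sum_add_distrib]
      refine Finset.sum_le_sum fun j _ => ?_
      have e : (θ + s • (t - θ)) j = (1 - s) * θ j + s * t j := by
        simp only [Pi.add_apply, Pi.smul_apply, Pi.sub_apply, smul_eq_mul]; ring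
      have h4 : |(θ + s • (t - θ)) j| ≤ (1 - s) * |θ j| + s * |t j| := by
        rw [e]
        refine (abs_add_le _ _).trans ?_
        rw [abs_mul, abs_mul, abs_of_nonneg (sub_nonneg.2 hs1), abs_of_pos hs]
      have := mul_le_mul_of_nonneg_left h4 (hν0 j)
      linarith
    rw [h2, aux_sq] at h1
    have h5 := mul_le_mul_of_nonneg_left h3 (by positivity : 0 ≤ 2 * α)
    linarith
  have e1 : sqNorm (Φ *ᵥ t - f) = sqNorm (Φ *ᵥ θ - f)
      + 2 * 1 * ((Φ *ᵥ θ - f) ⬝ᵥ (Φ *ᵥ (t - θ))) + 1 ^ 2 * sqNorm (Φ *ᵥ (t - θ)) := by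
    rw [← aux_sq, Matrix.mulVec_sub]; congr 1; rw [one_smul]; abel
  have e2 : (Φ *ᵥ θ - f) ⬝ᵥ (Φ *ᵥ (t - θ))
      = (Φ *ᵥ θ - z) ⬝ᵥ (Φ *ᵥ (t - θ)) - (Φ *ᵥ (θ - t)) ⬝ᵥ (z - f) := by
    have : Φ *ᵥ (θ - t) = - (Φ *ᵥ (t - θ)) := by rw [← Matrix.mulVec_neg, neg_sub]
    rw [this, neg_dotProduct, dotProduct_comm _ (z - f), sub_neg_eq_add, ← add_dotProduct]
    congr 1; abel
  have e3 : sqNorm (Φ *ᵥ (θ - t)) = sqNorm (Φ *ᵥ (t - θ)) := by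
    rw [← neg_sub t θ, Matrix.mulVec_neg]; simp [sqNorm]
  have h6 := hin (θ - t)
  have h7 : ∑ j, ν j * |t j| - ∑ j, ν j * |θ j| + ∑ j, ν j * |(θ - t) j|
      ≤ 2 * ∑ j ∈ J, ν j * |θ j - t j| := by
    rw [← Finset.sum_sub_distrib, ← Finset.sum_add_distrib, Finset.mul_sum,
      ← Finset.sum_subset (Finset.subset_univ J)]
    · refine Finset.sum_le_sum fun j _ => ?_
      have h8 : |t j| - |θ j| ≤ |θ j - t j| := by
        rw [abs_sub_comm]; exact abs_sub_abs_le_abs_sub _ _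
      have := mul_le_mul_of_nonneg_left h8 (hν0 j)
      simp only [Pi.sub_apply]
      linarith
    · intro j _ hj
      simp [ht j hj]
  have h9 := mul_le_mul_of_nonneg_left h7 (by positivity : 0 ≤ 2 * α)
  linarith
end
end

section
/- Let Φ ∈ ℝ^{n×p}, let δ ∈ (0,1) and s ≥ 1 be such that λ_min(2s;Φ) ≥ 1 − δ, let ν₁,…,ν_p ≥ 0, α > 0, J ⊆ {1,…,p}, and let d ∈ ℝᵖ with ‖d‖₀ ≤ 2s. Then 4α Σ_{j∈J} ν_j|d_j| ≤ ‖Φd‖₂² + (4α²/(1−δ)²) Σ_{j∈J} ν_j². -/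
open MeasureTheory ProbabilityTheory Matrix Finset

noncomputable section

/-- ℓ₀ "norm": the number of nonzero entries of a vector. -/
def l0 {p : ℕ} (t : Fin p → ℝ) : ℕ := (Function.support t).ncard

/-- bound on the weighted ℓ₁ term under the restricted eigenvalue condition
λ_min(2s;Φ) ≥ 1 − δ. -/
theorem stmt_8 {n p : ℕ} (Φ : Matrix (Fin n) (Fin p) ℝ) (δ : ℝ) (hδ : δ ∈ Set.Ioo (0:ℝ) 1)
    (s : ℕ) (hs : 1 ≤ s)
    (hRIP : ∀ t : Fin p → ℝ, l0 t ≤ 2 * s → (1 - δ) * sqNorm t ≤ sqNorm (Φ.mulVec t))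
    (ν : Fin p → ℝ) (hν : ∀ j, 0 ≤ ν j) (α : ℝ) (hα : 0 < α)
    (J : Finset (Fin p)) (d : Fin p → ℝ) (hd : l0 d ≤ 2 * s) :
    4 * α * ∑ j ∈ J, ν j * |d j| ≤
      sqNorm (Φ.mulVec d) + (4 * α^2 / (1 - δ)^2) * ∑ j ∈ J, (ν j)^2 := by
  obtain ⟨h0, h1⟩ := hδ
  have hc : 0 < 1 - δ := by linarith
  have hc1 : 1 - δ ≤ 1 := by linarith
  have hR := hRIP d hd
  generalize 1 - δ = c at hc hc1 hR ⊢
  have hsub : ∑ j ∈ J, (d j)^2 ≤ sqNorm d :=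
    Finset.sum_le_sum_of_subset_of_nonneg (Finset.subset_univ J)
      (fun i _ _ => sq_nonneg (d i))
  have hterm : ∀ j ∈ J, 4 * α * (ν j * |d j|) ≤
      c * (d j)^2 + (4 * α^2 / c^2) * (ν j)^2 := by
    intro j _
    have e1 : 4 * α * (ν j * |d j|) ≤ c * (d j)^2 + (4 * α^2 / c) * (ν j)^2 := by
      have e : c * (d j)^2 + (4 * α^2 / c) * (ν j)^2 - 4 * α * (ν j * |d j|)
          = (c * |d j| - 2 * α * ν j)^2 / c := by
        rw [← sq_abs (d j)]
        field_simp
        ring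
      have : 0 ≤ (c * |d j| - 2 * α * ν j)^2 / c := by positivity
      linarith
    have e2 : 4 * α^2 / c ≤ 4 * α^2 / c^2 := by
      apply div_le_div_of_nonneg_left (by positivity) (by positivity)
      nlinarith
    have e3 := mul_le_mul_of_nonneg_right e2 (sq_nonneg (ν j))
    linarith
  have hsum := Finset.sum_le_sum hterm
  rw [Finset.sum_add_distrib, ← Finset.mul_sum, ← Finset.mul_sum, ← Finset.mul_sum] at hsum
  have := mul_le_mul_of_nonneg_left hsub hc.le
  linarith
end
end

section
/- (Slow Lasso rate.) Consider y = Qf + ση ∈ ℝⁿ with Q invertible, Φ ∈ ℝ^{n×p} with ΦΦᵀ invertible, Ψ = Q(QᵀQ)⁻¹Φ with ν_j = ‖ψ_j‖₂, z = (ΦΦᵀ)⁻¹ΦΨᵀy, and θ̂ a minimizer of ‖Φt − z‖₂² + 2α Σ_j ν_j|t_j| with α ≥ ᾱ₀ = σ√(2(τ+1) log p). If the noise event {for all j: |ψ_jᵀη| ≤ ν_j √(2(τ+1) log p)} holds, then n⁻¹‖f_θ̂ − f‖₂² ≤ inf over t ∈ ℝᵖ of [ n⁻¹‖f_t − f‖₂²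 + 4(α/n) Σ_{j=1}^p ν_j|t_j| ]. -/
open MeasureTheory ProbabilityTheory Matrix Finset

noncomputable section

/-- slow Lasso rate on the noise event. -/
theorem stmt_10 {n p : ℕ} (Q : Matrix (Fin n) (Fin n) ℝ) (hQ : IsUnit Q.det)
    (Φ : Matrix (Fin n) (Fin p) ℝ) (hΦ : IsUnit (Φ * Φᵀ).det)
    (Ψ : Matrix (Fin n) (Fin p) ℝ) (hΨ : Ψ = Q * (Qᵀ * Q)⁻¹ * Φ)
    (ν : Fin p → ℝ) (hν : ∀ j, ν j = Real.sqrt (sqNorm (fun i => Ψ i j)))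
    (f η : Fin n → ℝ) (σ : ℝ) (hσ : 0 < σ) (τ : ℝ) (hτ : 0 < τ)
    (y z : Fin n → ℝ) (hy : y = Q.mulVec f + σ • η)
    (hz : z = ((Φ * Φᵀ)⁻¹ * Φ * Ψᵀ).mulVec y)
    (α : ℝ) (hα : α ≥ σ * Real.sqrt (2 * (τ + 1) * Real.log p))
    (θ : Fin p → ℝ)
    (hmin : ∀ t : Fin p → ℝ,
      sqNorm (Φ.mulVec θ - z) + 2 * α * ∑ j, ν j * |θ j| ≤
        sqNorm (Φ.mulVec t - z) + 2 * α * ∑ j, ν j * |t j|)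
    (hnoise : ∀ j : Fin p,
      |(fun i => Ψ i j) ⬝ᵥ η| ≤ ν j * Real.sqrt (2 * (τ + 1) * Real.log p)) :
    ∀ t : Fin p → ℝ,
      (n : ℝ)⁻¹ * sqNorm (Φ.mulVec θ - f) ≤
        (n : ℝ)⁻¹ * sqNorm (Φ.mulVec t - f) + 4 * (α / n) * ∑ j, ν j * |t j| := by
  intro t
  have hQt : IsUnit (Qᵀ * Q).det := by
    rw [Matrix.det_mul, Matrix.det_transpose]; exact hQ.mul hQ
  have hM : Ψᵀ = Φᵀ * ((Qᵀ * Q)⁻¹ * Qᵀ) := by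
    rw [hΨ, Matrix.transpose_mul, Matrix.transpose_mul, Matrix.transpose_nonsing_inv,
      Matrix.transpose_mul, Matrix.transpose_transpose]
  have hA : (Φ * Φᵀ)⁻¹ * Φ * Ψᵀ = (Qᵀ * Q)⁻¹ * Qᵀ := by
    rw [hM, ← Matrix.mul_assoc, Matrix.mul_assoc (Φ * Φᵀ)⁻¹ Φ Φᵀ,
      Matrix.nonsing_inv_mul _ hΦ, Matrix.one_mul]
  obtain ⟨w, hw⟩ : ∃ w, w = ((Qᵀ * Q)⁻¹ * Qᵀ).mulVec η := ⟨_, rfl⟩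
  have hzw : z = f + σ • w := by
    rw [hz, hA, hy, Matrix.mulVec_add, Matrix.mulVec_smul, Matrix.mulVec_mulVec,
      Matrix.mul_assoc, Matrix.nonsing_inv_mul _ hQt, Matrix.one_mulVec, hw]
  have hΦw : Φᵀ.mulVec w = Ψᵀ.mulVec η := by
    rw [hw, Matrix.mulVec_mulVec, hM]
  have hexp : ∀ u : Fin p → ℝ, sqNorm (Φ.mulVec u - z) =
      sqNorm (Φ.mulVec u - f) - 2 * σ * (w ⬝ᵥ Φ.mulVec u) + 2 * σ * (w ⬝ᵥ f)
        + σ ^ 2 * (w ⬝ᵥ w) := by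
    intro u
    simp only [sqNorm, hzw, dotProduct, Finset.mul_sum, ← Finset.sum_add_distrib,
      ← Finset.sum_sub_distrib]
    refine Finset.sum_congr rfl fun i _ => ?_
    simp only [Pi.sub_apply, Pi.add_apply, Pi.smul_apply, smul_eq_mul]
    ring
  have hdot : ∀ u : Fin p → ℝ, w ⬝ᵥ Φ.mulVec u = ∑ j, ((fun i => Ψ i j) ⬝ᵥ η) * u j := by
    intro u
    rw [Matrix.dotProduct_mulVec, ← Matrix.mulVec_transpose, hΦw]
    rfl
  have hν0 : ∀ j, 0 ≤ ν j := fun j => by rw [hν]; exact Real.sqrt_nonneg _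
  have hb : σ * (w ⬝ᵥ Φ.mulVec θ) - σ * (w ⬝ᵥ Φ.mulVec t) ≤
      α * ∑ j, ν j * |θ j| + α * ∑ j, ν j * |t j| := by
    rw [hdot, hdot]
    simp only [Finset.mul_sum, ← Finset.sum_add_distrib, ← Finset.sum_sub_distrib]
    refine Finset.sum_le_sum fun j _ => ?_
    have h1 := hnoise j
    generalize (fun i => Ψ i j) ⬝ᵥ η = c at h1 ⊢
    have h2 : |σ * c| ≤ α * ν j := by
      rw [abs_mul, abs_of_pos hσ]
      calc σ * |c| ≤ σ * (ν j * Real.sqrt (2 * (τ + 1) * Real.log p)) :=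
            mul_le_mul_of_nonneg_left h1 hσ.le
        _ = (σ * Real.sqrt (2 * (τ + 1) * Real.log p)) * ν j := by ring
        _ ≤ α * ν j := mul_le_mul_of_nonneg_right hα (hν0 j)
    have h3 : |θ j - t j| ≤ |θ j| + |t j| := abs_sub _ _
    calc σ * (c * θ j) - σ * (c * t j) = (σ * c) * (θ j - t j) := by ring
      _ ≤ |(σ * c) * (θ j - t j)| := le_abs_self _
      _ = |σ * c| * |θ j - t j| := abs_mul _ _
      _ ≤ (α * ν j) * (|θ j| + |t j|) :=
          mul_le_mul h2 h3 (abs_nonneg _) ((abs_nonneg _).trans h2)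
      _ = _ := by ring
  have hm := hmin t
  rw [hexp, hexp] at hm
  have hfin : sqNorm (Φ.mulVec θ - f) ≤
      sqNorm (Φ.mulVec t - f) + 4 * α * ∑ j, ν j * |t j| := by linarith
  calc (n : ℝ)⁻¹ * sqNorm (Φ.mulVec θ - f) ≤
      (n : ℝ)⁻¹ * (sqNorm (Φ.mulVec t - f) + 4 * α * ∑ j, ν j * |t j|) :=
        mul_le_mul_of_nonneg_left hfin (by positivity)
    _ = _ := by rw [div_eq_mul_inv]; ring
end
end
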